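/- Let S and A be nonempty finite types, P : S → A → PMF S a transition kernel, ρ0 a probability distribution on S, γ ∈ [0,1) a discount factor, and T ∈ ℕ a horizon. Let π_θ : ℝᵈ → S → A → ℝ be a parameterized policy such that for every θ ∈ ℝᵈ and s ∈ S the map a ↦ π_θ(a|s) is a strictly positive probability mass function on A, and for every s ∈ S, a ∈ A the map θ ↦ π_θ(a|s) is differentiable. Let R_i : S × A → ℝ be any (intrinsic) reward function, and define the finite-horizon objective D(θ) = Σ_{τ} p_θ(τ) Σ_{t=0}^{T} γ^t R_i(s_t, a_t), where the sum ranges over trajectories τ = (s_0, a_0, …, s_T, a_T) with probability p_θ(τ) = ρ0(s_0) · Π_{t=0}^{T} π_θ(a_t|s_t) · Π_{t=0}^{T-1} P(s_{t+1}|s_t, a_t). Then the gradient of D satisfies ∇_θ D(θ) = Σ_{τ} p_θ(τ) Σ_{t=0}^{T} γ^t (∇_θ log π_θ(a_t|s_t)) · Q_t(s_t, a_t), where Q_t(s, a) = E[Σ_{l=0}^{T-t} γ^l R_i(s_{t+l}, a_{t+l}) | s_t = s, a_t = a] is the expected discounted reward-to-go under π_θ from time t. -/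

import Mathlib

open scoped BigOperators

/-! A discounted sum of rewards that may depend on the number of remaining steps has expectation
`Σ_s μ(s) Σ_a p(a|s) U_T(s, a)`, where `U` is given by the Bellman recursion. This applies both to
the objective, with reward `R`, and to the claimed gradient, with the vector-valued reward
`Q_k(s, a) • ∇ log π_θ(a|s)` at `k` remaining steps. Differentiating the Bellman recursion for `Q`
and using `∇ π_θ = π_θ ∇ log π_θ` gives exactly the Bellman recursion of the second reward. -/

theorem sum_toReal_pmf {α : Type*} [Fintype α] (q : PMF α) : ∑ x, (q x).toReal = 1 := by
  rw [← ENNReal.toReal_sum fun x _ => q.apply_ne_top x,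
    ← tsum_fintype (L := .unconditional α), q.tsum_coe, ENNReal.toReal_one]

section Trajectory

variable {S A 𝕜 F : Type*} [CommSemiring 𝕜] [AddCommMonoid F] [Module 𝕜 F]

/-- The probability of the trajectory `τ` of horizon `T` in the Markov decision process with initial
distribution `μ`, policy `p` and transition kernel `P`; all three are encoded as
plain families of weights in `𝕜`. -/
def trajWeight (p : S → A → 𝕜) (P : S → A → S → 𝕜) (μ : S → 𝕜) (T : ℕ)
    (τ : Fin (T + 1) → S × A) : 𝕜 :=
  μ (τ 0).1 * (∏ t, p (τ t).1 (τ t).2) *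
    ∏ t : Fin T, P (τ t.castSucc).1 (τ t.castSucc).2 (τ t.succ).1

theorem trajWeight_cons (p : S → A → 𝕜) (P : S → A → S → 𝕜) (μ : S → 𝕜) (T : ℕ) (s : S) (a : A)
    (τ : Fin (T + 1) → S × A) :
    trajWeight p P μ (T + 1) (Fin.cons (s, a) τ) = μ s * p s a * trajWeight p P (P s a) T τ := by
  simp only [trajWeight, Fin.prod_univ_succ (n := T + 1), Fin.prod_univ_succ (n := T),
    Fin.cons_zero, Fin.cons_succ, Fin.castSucc_zero, ← Fin.succ_castSucc]
  ring

variable [Fintype S] [Fintype A]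

/-- The expected discounted reward collected from the state-action pair `(s, a)` on with `k`
remaining steps, as a Bellman recursion; a step with `j` steps remaining after it pays `r j`. -/
def rewardToGo (p : S → A → 𝕜) (P : S → A → S → 𝕜) (γ : 𝕜) (r : ℕ → S → A → F) (k : ℕ) :
    S → A → F :=
  Nat.rec (motive := fun _ => S → A → F) (r 0)
    (fun j ih s a => r (j + 1) s a + γ • ∑ s', P s a s' • ∑ a', p s' a' • ih s' a') k

theorem rewardToGo_succ (p : S → A → 𝕜) (P : S → A → S → 𝕜) (γ : 𝕜) (r : ℕ → S → A → F) (k : ℕ)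
    (s : S) (a : A) :
    rewardToGo p P γ r (k + 1) s a =
      r (k + 1) s a + γ • ∑ s', P s a s' • ∑ a', p s' a' • rewardToGo p P γ r k s' a' :=
  rfl

theorem sum_trajWeight_zero_smul (p : S → A → 𝕜) (P : S → A → S → 𝕜) (μ : S → 𝕜)
    (f : (Fin 1 → S × A) → F) :
    ∑ τ, trajWeight p P μ 0 τ • f τ = ∑ s, μ s • ∑ a, p s a • f fun _ => (s, a) := by
  rw [← (Equiv.funUnique (Fin 1) (S × A)).symm.sum_comp, Fintype.sum_prod_type]
  have symm_apply (x : S × A) : (Equiv.funUnique (Fin 1) (S × A)).symm x = fun _ => x := rfl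
  simp [symm_apply, trajWeight, Finset.smul_sum, mul_smul]

theorem sum_trajWeight_succ_smul (p : S → A → 𝕜) (P : S → A → S → 𝕜) (μ : S → 𝕜) (T : ℕ)
    (f : (Fin (T + 2) → S × A) → F) :
    ∑ τ, trajWeight p P μ (T + 1) τ • f τ =
      ∑ s, μ s • ∑ a, p s a • ∑ τ, trajWeight p P (P s a) T τ • f (Fin.cons (s, a) τ) := by
  rw [← (Fin.consEquiv fun _ => S × A).sum_comp, Fintype.sum_prod_type, Fintype.sum_prod_type]
  simp only [Fin.consEquiv, Equiv.coe_fn_mk, trajWeight_cons, Finset.smul_sum, mul_smul]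

variable {p : S → A → 𝕜} {P : S → A → S → 𝕜}

theorem sum_trajWeight (hp : ∀ s, ∑ a, p s a = 1) (hP : ∀ s a, ∑ s', P s a s' = 1) (μ : S → 𝕜)
    (T : ℕ) : ∑ τ, trajWeight p P μ T τ = ∑ s, μ s := by
  induction T generalizing μ with
  | zero => simpa [hp] using sum_trajWeight_zero_smul p P μ fun _ => (1 : 𝕜)
  | succ T ih => simpa [ih, hp, hP] using sum_trajWeight_succ_smul p P μ T fun _ => (1 : 𝕜)

theorem sum_trajWeight_smul_sum_discounted (hp : ∀ s, ∑ a, p s a = 1)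
    (hP : ∀ s a, ∑ s', P s a s' = 1) (γ : 𝕜) (r : ℕ → S → A → F) (μ : S → 𝕜) (T : ℕ) :
    ∑ τ, trajWeight p P μ T τ •
        ∑ t : Fin (T + 1), γ ^ (t : ℕ) • r (T - t) (τ t).1 (τ t).2 =
      ∑ s, μ s • ∑ a, p s a • rewardToGo p P γ r T s a := by
  induction T generalizing μ with
  | zero => simp [sum_trajWeight_zero_smul, rewardToGo]
  | succ T ih =>
    have discounted_cons (s : S) (a : A) (τ : Fin (T + 1) → S × A) :
        ∑ t : Fin (T + 2), γ ^ (t : ℕ) • r (T + 1 - t)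
            (Fin.cons (α := fun _ => S × A) (s, a) τ t).1
            (Fin.cons (α := fun _ => S × A) (s, a) τ t).2 =
          r (T + 1) s a +
            γ • ∑ t : Fin (T + 1), γ ^ (t : ℕ) • r (T - t) (τ t).1 (τ t).2 := by
      simp [Fin.sum_univ_succ (n := T + 1), Finset.smul_sum, pow_succ', mul_smul]
    simp only [sum_trajWeight_succ_smul, discounted_cons, smul_add, Finset.sum_add_distrib,
      ← Finset.sum_smul, sum_trajWeight hp hP, hP, one_smul, smul_comm _ γ, ← Finset.smul_sum, ih,
      rewardToGo_succ]

end Trajectory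

section Gradient

variable {S A E : Type*} [Fintype A] [NormedAddCommGroup E] [NormedSpace ℝ E]

theorem hasFDerivAt_smul_fderiv_log {f : E → ℝ} {θ : E} (hf : DifferentiableAt ℝ f θ)
    (hθ : f θ ≠ 0) : HasFDerivAt f (f θ • fderiv ℝ (fun θ' => Real.log (f θ')) θ) θ := by
  rw [fderiv.log hf hθ, smul_inv_smul₀ hθ]
  exact hf.hasFDerivAt

theorem hasFDerivAt_sum_mul_fderiv_log {p q : E → A → ℝ} {q' : A → E →L[ℝ] ℝ} {θ : E}
    (hp0 : ∀ a, p θ a ≠ 0) (hp : ∀ a, DifferentiableAt ℝ (fun θ' => p θ' a) θ)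
    (hq : ∀ a, HasFDerivAt (fun θ' => q θ' a) (q' a) θ) :
    HasFDerivAt (fun θ' => ∑ a, p θ' a * q θ' a)
      (∑ a, p θ a • (q θ a • fderiv ℝ (fun θ' => Real.log (p θ' a)) θ + q' a)) θ := by
  refine HasFDerivAt.fun_sum fun a _ => ?_
  refine ((hasFDerivAt_smul_fderiv_log (hp a) (hp0 a)).mul (hq a)).congr_fderiv ?_
  rw [smul_add, smul_comm (q θ a), add_comm]

variable [Fintype S]

/-- The reward `Q_k(s, a) • ∇ log π_θ(a|s)` at `k` remaining steps, whose expected discounted sum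
is the policy gradient; `Q_k` is the reward-to-go of `R` under `π θ`, and the gradient is encoded as
a continuous linear functional on the parameter space. -/
noncomputable def scoreReward (π : E → S → A → ℝ) (P : S → A → S → ℝ) (γ : ℝ) (R : S → A → ℝ)
    (θ : E) (k : ℕ) (s : S) (a : A) : E →L[ℝ] ℝ :=
  rewardToGo (π θ) P γ (fun _ => R) k s a • fderiv ℝ (fun θ' => Real.log (π θ' s a)) θ

variable {π : E → S → A → ℝ} {θ : E}

theorem hasFDerivAt_sum_mul_rewardToGo (hπ0 : ∀ s a, π θ s a ≠ 0)
    (hπ : ∀ s a, DifferentiableAt ℝ (fun θ' => π θ' s a) θ) (P : S → A → S → ℝ) (γ : ℝ)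
    (R : S → A → ℝ) (k : ℕ) (s : S) :
    HasFDerivAt (fun θ' => ∑ a, π θ' s a * rewardToGo (π θ') P γ (fun _ => R) k s a)
      (∑ a, π θ s a • rewardToGo (π θ) P γ (scoreReward π P γ R θ) k s a) θ := by
  induction k generalizing s with
  | zero =>
    simpa [rewardToGo, scoreReward] using
      hasFDerivAt_sum_mul_fderiv_log (p := fun θ' => π θ' s) (hπ0 s) (hπ s) fun a =>
        hasFDerivAt_const (R s a) θ
  | succ k ih =>
    have hasFDerivAt_rewardToGo (a : A) :
        HasFDerivAt (fun θ' => rewardToGo (π θ') P γ (fun _ => R) (k + 1) s a)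
          (γ • ∑ s', P s a s' •
            ∑ a', π θ s' a' • rewardToGo (π θ) P γ (scoreReward π P γ R θ) k s' a') θ :=
      ((HasFDerivAt.fun_sum fun s' _ => (ih s').const_mul (P s a s')).const_mul γ).const_add (R s a)
    exact hasFDerivAt_sum_mul_fderiv_log (hπ0 s) (hπ s) hasFDerivAt_rewardToGo

open Filter Topology in
theorem tace_policy_gradient_mmd_term_general (P : S → A → S → ℝ)
    (hP : ∀ s a, ∑ s', P s a s' = 1) (μ : S → ℝ) (γ : ℝ) (T : ℕ)
    (hπpos : ∀ s a, 0 < π θ s a) (hπsum : ∀ᶠ θ' in 𝓝 θ, ∀ s, ∑ a, π θ' s a = 1)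
    (hπdiff : ∀ s a, DifferentiableAt ℝ (fun θ' => π θ' s a) θ) (R : S → A → ℝ) :
    HasFDerivAt
      (fun θ' => ∑ τ, trajWeight (π θ') P μ T τ *
        ∑ t : Fin (T + 1), γ ^ (t : ℕ) * R (τ t).1 (τ t).2)
      (∑ τ, trajWeight (π θ) P μ T τ •
        ∑ t : Fin (T + 1),
          (γ ^ (t : ℕ) * rewardToGo (π θ) P γ (fun _ => R) (T - t) (τ t).1 (τ t).2) •
            fderiv ℝ (fun θ' => Real.log (π θ' (τ t).1 (τ t).2)) θ) θ := by
  have objective_eq : (fun θ' => ∑ τ, trajWeight (π θ') P μ T τ *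
        ∑ t : Fin (T + 1), γ ^ (t : ℕ) * R (τ t).1 (τ t).2) =ᶠ[𝓝 θ]
      fun θ' => ∑ s, μ s * ∑ a, π θ' s a * rewardToGo (π θ') P γ (fun _ => R) T s a :=
    hπsum.mono fun θ' hθ' => sum_trajWeight_smul_sum_discounted hθ' hP γ (fun _ => R) μ T
  have gradient_eq := sum_trajWeight_smul_sum_discounted hπsum.self_of_nhds hP γ
    (scoreReward π P γ R θ) μ T
  have hasFDerivAt_value :
      HasFDerivAt
        (fun θ' => ∑ s, μ s * ∑ a, π θ' s a * rewardToGo (π θ') P γ (fun _ => R) T s a)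
        (∑ s, μ s • ∑ a, π θ s a • rewardToGo (π θ) P γ (scoreReward π P γ R θ) T s a) θ :=
    HasFDerivAt.fun_sum fun s _ =>
      (hasFDerivAt_sum_mul_rewardToGo (fun s a => (hπpos s a).ne') hπdiff P γ R T s).const_mul (μ s)
  simp only [mul_smul]
  exact (hasFDerivAt_value.congr_of_eventuallyEq objective_eq).congr_fderiv gradient_eq.symm

end Gradient

/-- Lemma 1 (gradient derivation of the MMD term): in a finite MDP with horizon `T`,
for a differentiable, strictly positive parameterized policy `π_θ`, the gradient of
the finite-horizon objective
`D(θ) = Σ_τ p_θ(τ) Σ_{t=0}^T γ^t R_i(s_t, a_t)` is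
`∇_θ D(θ) = Σ_τ p_θ(τ) Σ_{t=0}^T γ^t (∇_θ log π_θ(a_t|s_t)) Q_t(s_t,a_t)`,
where `Q_t(s,a)` is the expected discounted reward-to-go from time `t`,
characterized recursively by
`Q_T(s,a) = R_i(s,a)` and
`Q_t(s,a) = R_i(s,a) + γ Σ_{s'} P(s'|s,a) Σ_{a'} π_θ(a'|s') Q_{t+1}(s',a')`. -/
theorem tace_policy_gradient_mmd_term
    {S A : Type*} [Fintype S] [Fintype A] [Nonempty S] [Nonempty A]
    [DecidableEq S] [DecidableEq A]
    (d : ℕ) (P : S → A → PMF S) (ρ0 : PMF S)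
    (γ : ℝ) (hγ0 : 0 ≤ γ) (hγ1 : γ < 1) (T : ℕ)
    (π : (Fin d → ℝ) → S → A → ℝ)
    (hπpos : ∀ θ s a, 0 < π θ s a)
    (hπsum : ∀ θ s, ∑ a : A, π θ s a = 1)
    (hπdiff : ∀ s a, Differentiable ℝ fun θ : Fin d → ℝ => π θ s a)
    (Ri : S → A → ℝ) (θ : Fin d → ℝ) :
    -- probability of a trajectory `τ = (s_0,a_0,…,s_T,a_T)` under `π_{θ'}`
    let ptraj : (Fin d → ℝ) → (Fin (T + 1) → S × A) → ℝ := fun θ' τ =>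
      (ρ0 (τ 0).1).toReal * (∏ t : Fin (T + 1), π θ' (τ t).1 (τ t).2) *
        ∏ t : Fin T, (P (τ t.castSucc).1 (τ t.castSucc).2 (τ t.succ).1).toReal
    -- expected discounted reward-to-go with `k` remaining steps under `π_θ`:
    -- `Qrem k s a = E[Σ_{l=0}^{k} γ^l R_i(s_{t+l},a_{t+l}) | s_t = s, a_t = a]`
    let Qrem : ℕ → S → A → ℝ := fun k =>
      Nat.rec (motive := fun _ => S → A → ℝ) Ri
        (fun _ ih s a => Ri s a + γ * ∑ s' : S, (P s a s').toReal *
          ∑ a' : A, π θ s' a' * ih s' a') k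
    -- the finite-horizon objective `D(θ') = Σ_τ p_{θ'}(τ) Σ_{t=0}^T γ^t R_i(s_t,a_t)`
    let D : (Fin d → ℝ) → ℝ := fun θ' =>
      ∑ τ : Fin (T + 1) → S × A, ptraj θ' τ *
        ∑ t : Fin (T + 1), γ ^ (t : ℕ) * Ri (τ t).1 (τ t).2
    fderiv ℝ D θ =
      ∑ τ : Fin (T + 1) → S × A, ptraj θ τ •
        ∑ t : Fin (T + 1),
          (γ ^ (t : ℕ) * Qrem (T - (t : ℕ)) (τ t).1 (τ t).2) •
            fderiv ℝ (fun θ' => Real.log (π θ' (τ t).1 (τ t).2)) θ := by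
  exact (tace_policy_gradient_mmd_term_general _ (fun s a => sum_toReal_pmf (P s a))
    (fun s => (ρ0 s).toReal) γ T (hπpos θ) (.of_forall hπsum) (fun s a => hπdiff s a θ) Ri).fderiv
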